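/- Let n ≥ 1 and k ≥ 1 be integers. Then (Vol S̃q / Vol B_M)^{1/D_M} ≤ ∫_{S_M} ‖f‖_{sq} dμ(f), where ‖f‖_{sq} = max{ |⟨f, g²⟩| : g ∈ P_{n,k}, ⟨g,g⟩ = 1 } and Vol denotes D_M-dimensional Lebesgue volume in M. -/

import Mathlib

/-!
# The volume ratio of `S̃q` is at most the average of `‖·‖_sq`

Write `h y = ‖φ y‖_sq`, a continuous, nonnegative, positively homogeneous function on `ℝ^D ≅ M`.

*The body lies in the Wulff shape of `h`.* If `f ∈ M` and `f + r^{2k} = ∑ gᵢ²`, integrating over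
the sphere gives `∑ ⟨gᵢ, gᵢ⟩ = 1`, so for `p ∈ M` one has
`⟨p, f⟩ = ⟨p, f + r^{2k}⟩ = ∑ ⟨p, gᵢ²⟩ ≤ ∑ ⟨gᵢ, gᵢ⟩ ‖p‖_sq = ‖p‖_sq`. Hence `S̃q` is contained in
the body `L = {x | ∀ y, ⟨x, y⟩ ≤ h y}` (`preimage_Sqtilde_subset_wulff`).

*Urysohn's inequality for `L`* (`urysohn`): `(vol L / vol B)^{1/D} ≤ ∫ h dμ`. By scaling one may
assume `vol L = vol B`, and the Brunn–Minkowski inequality in the form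
`volume_le_of_convexComb_subset` gives `vol B ≤ vol ((1 - t) B + t L)` for `0 < t < 1`. A point `x`
of that set satisfies `‖x‖ ≤ (1 - t) + t h (x / ‖x‖)`, so integrating in polar coordinates
(`volume_le_lintegral_radial`) yields `1 ≤ ∫ (1 - t + t h)^D dμ`. Letting `t → 0` and comparing
first-order terms gives `1 ≤ ∫ h dμ` (`le_integral_of_forall_le_pow`).

Two ingredients are developed from scratch. Brunn–Minkowski is deduced from the Prékopa–Leindler
inequality, proved by induction on the dimension from the one-dimensional case. Polar coordinates
with respect to an arbitrary rotation-invariant probability measure `μ` on the sphere come from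
characteristic functions: the characteristic function of a rotation-invariant measure depends only
on the norm of its argument, which identifies such a measure `m` with the law of `‖x‖ • y` under
`m × μ` (`map_norm_smul_prod_eq`).
-/

open MeasureTheory MvPolynomial
open scoped ENNReal RealInnerProductSpace

noncomputable section

/-- Evaluation of a multivariate polynomial at a point of Euclidean space `ℝⁿ`. -/
def peval {n : ℕ} (p : MvPolynomial (Fin n) ℝ) (x : EuclideanSpace ℝ (Fin n)) : ℝ :=
  MvPolynomial.eval (fun i => x i) p

/-- The `L²(σ)` inner product `⟨f,g⟩ = ∫ f·g dσ` on polynomials. -/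
def pinner {n : ℕ} (σ : Measure (EuclideanSpace ℝ (Fin n)))
    (f g : MvPolynomial (Fin n) ℝ) : ℝ :=
  ∫ x, peval f x * peval g x ∂σ

/-- `μ` is a rotation-invariant probability measure concentrated on the unit sphere. -/
def IsRotInvSphereProb {E : Type*} [NormedAddCommGroup E] [NormedSpace ℝ E]
    [MeasurableSpace E] (μ : Measure E) : Prop :=
  IsProbabilityMeasure μ ∧ μ (Metric.sphere (0 : E) 1)ᶜ = 0 ∧
    ∀ T : E ≃ₗᵢ[ℝ] E, Measure.map T μ = μ

/-- The hyperplane `M` of forms of degree `2k` with integral `0` on the sphere. -/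
def Mset (n k : ℕ) (σ : Measure (EuclideanSpace ℝ (Fin n))) :
    Set (MvPolynomial (Fin n) ℝ) :=
  {f | f.IsHomogeneous (2 * k) ∧ ∫ x, peval f x ∂σ = 0}

/-- The form `r^{2k} = (x₁² + ⋯ + xₙ²)^k`. -/
def rSq (n k : ℕ) : MvPolynomial (Fin n) ℝ :=
  (∑ i : Fin n, X i ^ 2) ^ k

/-- The cone `C` of nonnegative forms of degree `2k`. -/
def Cset (n k : ℕ) : Set (MvPolynomial (Fin n) ℝ) :=
  {f | f.IsHomogeneous (2 * k) ∧ ∀ x : EuclideanSpace ℝ (Fin n), 0 ≤ peval f x}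

/-- The cone `Sq` of sums of squares of forms of degree `k`. -/
def Sqset (n k : ℕ) : Set (MvPolynomial (Fin n) ℝ) :=
  {f | ∃ (m : ℕ) (g : Fin m → MvPolynomial (Fin n) ℝ),
    (∀ i, (g i).IsHomogeneous k) ∧ f = ∑ i, g i ^ 2}

/-- The compact base `C̃ = {f ∈ M : f + r^{2k} ∈ C}`. -/
def Ctilde (n k : ℕ) (σ : Measure (EuclideanSpace ℝ (Fin n))) :
    Set (MvPolynomial (Fin n) ℝ) :=
  {f ∈ Mset n k σ | f + rSq n k ∈ Cset n k}

/-- The compact base `S̃q = {f ∈ M : f + r^{2k} ∈ Sq}`. -/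
def Sqtilde (n k : ℕ) (σ : Measure (EuclideanSpace ℝ (Fin n))) :
    Set (MvPolynomial (Fin n) ℝ) :=
  {f ∈ Mset n k σ | f + rSq n k ∈ Sqset n k}

/-- `φ` is a linear isometry (w.r.t. the `L²(σ)` inner product) identifying Euclidean
`D`-space with the hyperplane `M`; in particular `D = D_M = dim M`. -/
def IsCoordOfM (n k D : ℕ) (σ : Measure (EuclideanSpace ℝ (Fin n)))
    (φ : EuclideanSpace ℝ (Fin D) →ₗ[ℝ] MvPolynomial (Fin n) ℝ) : Prop :=
  Function.Injective φ ∧ Set.range φ = Mset n k σ ∧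
    ∀ y z : EuclideanSpace ℝ (Fin D), pinner σ (φ y) (φ z) = ⟪y, z⟫

/-- The `L^∞` norm of a polynomial on the unit sphere `S^{n-1}`. -/
def supNorm {n : ℕ} (f : MvPolynomial (Fin n) ℝ) : ℝ :=
  sSup ((fun x => |peval f x|) '' Metric.sphere (0 : EuclideanSpace ℝ (Fin n)) 1)

/-- The norm `‖f‖_sq = max {|⟨f, g²⟩| : g ∈ P_{n,k}, ⟨g,g⟩ = 1}`. -/
def sqNorm {n : ℕ} (k : ℕ) (σ : Measure (EuclideanSpace ℝ (Fin n)))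
    (f : MvPolynomial (Fin n) ℝ) : ℝ :=
  sSup ((fun g => |pinner σ f (g ^ 2)|) ''
    {g : MvPolynomial (Fin n) ℝ | g.IsHomogeneous k ∧ pinner σ g g = 1})

/-! ### The Prékopa–Leindler inequality -/

/-- The Brunn–Minkowski inequality on the line. For compact `K` and `L` the translates `K + inf L`
and `sup K + L` lie in `K + L` and meet in the single point `sup K + inf L`; the general case
follows by inner regularity. -/
theorem volume_add_le_real {A B C : Set ℝ} (hA : MeasurableSet A) (hB : MeasurableSet B)
    (hA0 : A.Nonempty) (hB0 : B.Nonempty) (hC : ∀ a ∈ A, ∀ b ∈ B, a + b ∈ C) :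
    volume A + volume B ≤ volume C := by
  have key : ∀ K L : Set ℝ, K ⊆ A → L ⊆ B → IsCompact K → IsCompact L → K.Nonempty →
      L.Nonempty → volume K + volume L ≤ volume C := by
    intro K L hKA hLB hK hL hK0 hL0
    have hp := hK.sSup_mem hK0
    have hq := hL.sInf_mem hL0
    set p := sSup K
    set q := sInf L
    -- `K + inf L` lies to the left of `p + q` and `sup K + L` to the right.
    have h1 : volume K ≤ volume (C ∩ Set.Iic (p + q)) := by
      rw [← measure_preimage_add_right volume (-q) K]
      refine measure_mono fun x hx => ?_
      have hx' : x + -q ∈ K := hx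
      have := le_csSup hK.bddAbove hx'
      refine ⟨?_, ?_⟩
      · have := hC _ (hKA hx') _ (hLB hq)
        simpa using this
      · simp only [Set.mem_Iic]; linarith
    have h2 : volume L ≤ volume (C \ Set.Iic (p + q)) := by
      rw [← measure_preimage_add_right volume (-p) L]
      have : volume (C \ Set.Iic (p + q)) = volume (C \ Set.Iio (p + q)) := by
        refine measure_congr ?_
        exact (Filter.EventuallyEq.refl _ _).diff Iio_ae_eq_Iic.symm
      rw [this]
      refine measure_mono fun x hx => ?_
      have hx' : x + -p ∈ L := hx
      have := csInf_le hL.bddBelow hx'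
      refine ⟨?_, ?_⟩
      · have := hC _ (hKA hp) _ (hLB hx')
        simpa using this
      · simp only [Set.mem_Iio, not_lt]; linarith
    calc volume K + volume L ≤ _ := add_le_add h1 h2
      _ = volume C := measure_inter_add_sdiff C measurableSet_Iic
  -- Null sets are treated apart: inner regularity only produces nonempty compact subsets of
  -- sets of positive measure.
  rcases eq_or_ne (volume A) 0 with hA1 | hA1
  · obtain ⟨a, ha⟩ := hA0
    rw [hA1, zero_add, ← measure_preimage_add_right volume (-a) B]
    refine measure_mono fun x hx => ?_
    simpa using hC _ ha _ (show x + -a ∈ B from hx)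
  rcases eq_or_ne (volume B) 0 with hB1 | hB1
  · obtain ⟨b, hb⟩ := hB0
    rw [hB1, add_zero, ← measure_preimage_add_right volume (-b) A]
    refine measure_mono fun x hx => ?_
    simpa using hC _ (show x + -b ∈ A from hx) _ hb
  refine le_of_forall_lt fun c hc => ?_
  obtain ⟨r, hr, q, hq, hrq⟩ := ENNReal.exists_lt_add_of_lt_add hc hA1 hB1
  obtain ⟨K, hKA, hK, hrK⟩ := hA.exists_lt_isCompact hr
  obtain ⟨L, hLB, hL, hqL⟩ := hB.exists_lt_isCompact hq
  exact hrq.trans_le <| (add_le_add hrK.le hqL.le).trans (key K L hKA hLB hK hL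
    (nonempty_of_measure_ne_zero hrK.ne_bot) (nonempty_of_measure_ne_zero hqL.ne_bot))

open scoped Pointwise in
theorem volume_convexComb_le_real {A B C : Set ℝ} {t : ℝ} (ht0 : 0 < t) (ht1 : t < 1)
    (hA : MeasurableSet A) (hB : MeasurableSet B)
    (hA0 : A.Nonempty) (hB0 : B.Nonempty)
    (hC : ∀ a ∈ A, ∀ b ∈ B, (1 - t) * a + t * b ∈ C) :
    ENNReal.ofReal (1 - t) * volume A + ENNReal.ofReal t * volume B ≤ volume C := by
  have h1 : volume ((1 - t) • A) = ENNReal.ofReal (1 - t) * volume A := by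
    rw [Measure.addHaar_smul]; simp [abs_of_pos (sub_pos.2 ht1)]
  have h2 : volume (t • B) = ENNReal.ofReal t * volume B := by
    rw [Measure.addHaar_smul]; simp [abs_of_pos ht0]
  rw [← h1, ← h2]
  refine volume_add_le_real (hA.const_smul₀ _) (hB.const_smul₀ _)
    hA0.smul_set hB0.smul_set ?_
  rintro _ ⟨a, ha, rfl⟩ _ ⟨b, hb, rfl⟩
  exact hC a ha b hb

theorem ennreal_geom_mean_le {t : ℝ} (ht0 : 0 < t) (ht1 : t < 1) (a b : ℝ≥0∞) :
    a ^ (1 - t) * b ^ t ≤ ENNReal.ofReal (1 - t) * a + ENNReal.ofReal t * b := by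
  have h1 : 0 < 1 - t := sub_pos.2 ht1
  have hpq : (1 - t)⁻¹.HolderConjugate t⁻¹ := by
    rw [Real.holderConjugate_iff]
    exact ⟨(one_lt_inv₀ h1).2 (by linarith), by simp⟩
  have := ENNReal.young_inequality (a ^ (1 - t)) (b ^ t) hpq
  rw [← ENNReal.rpow_mul, ← ENNReal.rpow_mul, mul_inv_cancel₀ h1.ne', mul_inv_cancel₀ ht0.ne',
    ENNReal.rpow_one, ENNReal.rpow_one, ENNReal.ofReal_inv_of_pos h1,
    ENNReal.ofReal_inv_of_pos ht0, div_eq_mul_inv, div_eq_mul_inv, inv_inv, inv_inv] at this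
  rwa [mul_comm a, mul_comm b] at this

/-- The additive form of the one-dimensional Prékopa–Leindler inequality for functions with
supremum `1`. By the layer cake formula it reduces to the Brunn–Minkowski inequality for the
superlevel sets, which are nonempty for the same levels `s < 1`; this is where the common
normalisation is used. -/
theorem lintegral_convexComb_le_real {f g h : ℝ → ℝ} {t : ℝ} (ht0 : 0 < t) (ht1 : t < 1)
    (hf : Measurable f) (hg : Measurable g) (hh : Measurable h)
    (hf0 : ∀ x, 0 ≤ f x) (hg0 : ∀ x, 0 ≤ g x) (hh0 : ∀ x, 0 ≤ h x)
    (hf1 : ∀ x, f x ≤ 1) (hg1 : ∀ x, g x ≤ 1)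
    (hfs : ∀ s < 1, ∃ x, s < f x) (hgs : ∀ s < 1, ∃ x, s < g x)
    (hfgh : ∀ s, 0 < s → ∀ x y, s < f x → s < g y → s < h ((1 - t) * x + t * y)) :
    ENNReal.ofReal (1 - t) * (∫⁻ x, ENNReal.ofReal (f x)) +
      ENNReal.ofReal t * (∫⁻ x, ENNReal.ofReal (g x)) ≤ ∫⁻ x, ENNReal.ofReal (h x) := by
  rw [lintegral_eq_lintegral_meas_lt _ (.of_forall hf0) hf.aemeasurable,
    lintegral_eq_lintegral_meas_lt _ (.of_forall hg0) hg.aemeasurable,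
    lintegral_eq_lintegral_meas_lt _ (.of_forall hh0) hh.aemeasurable]
  have mf : Measurable fun s => volume {a | s < f a} :=
    Antitone.measurable fun a b hab => measure_mono fun x hx => lt_of_le_of_lt hab hx
  rw [← lintegral_const_mul' _ _ ENNReal.ofReal_ne_top,
    ← lintegral_const_mul' _ _ ENNReal.ofReal_ne_top, ← lintegral_add_left (mf.const_mul _)]
  refine setLIntegral_mono' measurableSet_Ioi fun s hs => ?_
  rcases lt_or_ge s 1 with h1 | h1
  · exact volume_convexComb_le_real ht0 ht1 (measurableSet_lt measurable_const hf)
      (measurableSet_lt measurable_const hg) (hfs s h1) (hgs s h1)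
      fun a ha b hb => hfgh s hs a b ha hb
  · have e1 : {a | s < f a} = ∅ := by
      ext x; simpa using (hf1 x).trans h1
    have e2 : {a | s < g a} = ∅ := by
      ext x; simpa using (hg1 x).trans h1
    simp [e1, e2]

/-- The one-dimensional Prékopa–Leindler inequality for bounded functions. Dividing `f` and `g` by
their suprema `a` and `b`, and `h` by `a ^ (1 - t) * b ^ t`, gives functions to which
`lintegral_convexComb_le_real` applies; the arithmetic-geometric mean inequality then turns the
additive estimate into the multiplicative one. -/
theorem prekopa_leindler_real_bdd {f g h : ℝ → ℝ≥0∞} {t : ℝ} (ht0 : 0 < t) (ht1 : t < 1)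
    (hf : Measurable f) (hg : Measurable g) (hh : Measurable h) (N : ℕ)
    (hfN : ∀ x, f x ≤ N) (hgN : ∀ x, g x ≤ N)
    (hfgh : ∀ x y, f x ^ (1 - t) * g y ^ t ≤ h ((1 - t) * x + t * y)) :
    (∫⁻ x, f x) ^ (1 - t) * (∫⁻ x, g x) ^ t ≤ ∫⁻ x, h x := by
  have ht1' : 0 < 1 - t := sub_pos.2 ht1
  set a := ⨆ x, f x with ha
  set b := ⨆ x, g x with hb
  have hfa : ∀ x, f x ≤ a := le_iSup f
  have hgb : ∀ x, g x ≤ b := le_iSup g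
  have haT : a ≠ ∞ := ((iSup_le hfN).trans_lt (ENNReal.natCast_lt_top N)).ne
  have hbT : b ≠ ∞ := ((iSup_le hgN).trans_lt (ENNReal.natCast_lt_top N)).ne
  rcases eq_or_ne a 0 with ha0 | ha0
  · have : ∀ x, f x = 0 := fun x => le_zero_iff.1 (ha0 ▸ hfa x)
    simp [this, ht1']
  rcases eq_or_ne b 0 with hb0 | hb0
  · have : ∀ x, g x = 0 := fun x => le_zero_iff.1 (hb0 ▸ hgb x)
    simp [this, ht0]
  set c := a ^ (1 - t) * b ^ t with hc
  have hat0 : a ^ (1 - t) ≠ 0 := by simp [ENNReal.rpow_eq_zero_iff, ha0, haT]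
  have hbt0 : b ^ t ≠ 0 := by simp [ENNReal.rpow_eq_zero_iff, hb0, hbT]
  have hatT : a ^ (1 - t) ≠ ∞ := ENNReal.rpow_ne_top_of_nonneg ht1'.le haT
  have hbtT : b ^ t ≠ ∞ := ENNReal.rpow_ne_top_of_nonneg ht0.le hbT
  have hc0 : c ≠ 0 := mul_ne_zero hat0 hbt0
  have hcT : c ≠ ∞ := ENNReal.mul_ne_top hatT hbtT
  have hfa1 : ∀ x, f x / a ≤ 1 := fun x => ENNReal.div_le_of_le_mul (by simpa using hfa x)
  have hgb1 : ∀ x, g x / b ≤ 1 := fun x => ENNReal.div_le_of_le_mul (by simpa using hgb x)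
  have hfaT : ∀ x, f x / a ≠ ∞ := fun x => ((hfa1 x).trans_lt ENNReal.one_lt_top).ne
  have hgbT : ∀ x, g x / b ≠ ∞ := fun x => ((hgb1 x).trans_lt ENNReal.one_lt_top).ne
  have hhT : ∀ x, min (h x / c) 1 ≠ ∞ := fun x =>
    ((min_le_right _ _).trans_lt ENNReal.one_lt_top).ne
  have sup : ∀ {F : ℝ → ℝ≥0∞} {A : ℝ≥0∞}, A = ⨆ x, F x → A ≠ 0 → A ≠ ∞ →
      (∀ x, F x / A ≠ ∞) → ∀ s : ℝ, s < 1 → ∃ x, s < (F x / A).toReal := by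
    intro F A hA hA0 hAT hT s hs
    by_contra hcon
    push Not at hcon
    have hs0 : 0 ≤ s := ENNReal.toReal_nonneg.trans (hcon 0)
    have : A ≤ ENNReal.ofReal s * A := by
      conv_lhs => rw [hA]
      refine iSup_le fun x => ?_
      have := (ENNReal.le_ofReal_iff_toReal_le (hT x) hs0).2 (hcon x)
      rwa [ENNReal.div_le_iff hA0 hAT] at this
    have h2 : ENNReal.ofReal s * A < 1 * A :=
      ENNReal.mul_lt_mul_left hA0 hAT (by simpa using hs)
    rw [one_mul] at h2
    exact absurd this (not_le.2 h2)
  -- The minimum with `1` makes the third function finite, so that it can be taken real-valued.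
  have key := lintegral_convexComb_le_real (f := fun x => (f x / a).toReal)
    (g := fun x => (g x / b).toReal) (h := fun x => (min (h x / c) 1).toReal) ht0 ht1
    (hf.div_const a).ennreal_toReal (hg.div_const b).ennreal_toReal
    ((hh.div_const c).min measurable_const).ennreal_toReal
    (fun _ => ENNReal.toReal_nonneg) (fun _ => ENNReal.toReal_nonneg)
    (fun _ => ENNReal.toReal_nonneg)
    (fun x => ENNReal.toReal_le_of_le_ofReal zero_le_one (by simpa using hfa1 x))
    (fun x => ENNReal.toReal_le_of_le_ofReal zero_le_one (by simpa using hgb1 x))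
    (sup ha ha0 haT hfaT) (sup hb hb0 hbT hgbT) ?_
  · simp only [ENNReal.ofReal_toReal (hfaT _), ENNReal.ofReal_toReal (hgbT _),
      ENNReal.ofReal_toReal (hhT _)] at key
    have key2 := (ennreal_geom_mean_le ht0 ht1 _ _).trans key
    have key3 : (∫⁻ x, f x / a) ^ (1 - t) * (∫⁻ x, g x / b) ^ t ≤ (∫⁻ x, h x) / c := by
      refine key2.trans ?_
      simp only [div_eq_mul_inv]
      rw [← lintegral_mul_const _ hh]
      exact lintegral_mono fun x => min_le_left _ _
    simp only [div_eq_mul_inv] at key3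
    rw [lintegral_mul_const _ hf, lintegral_mul_const _ hg, ← div_eq_mul_inv,
      ← div_eq_mul_inv, ENNReal.div_rpow_of_nonneg _ _ ht1'.le,
      ENNReal.div_rpow_of_nonneg _ _ ht0.le] at key3
    calc (∫⁻ x, f x) ^ (1 - t) * (∫⁻ x, g x) ^ t
        = ((∫⁻ x, f x) ^ (1 - t) / a ^ (1 - t) * ((∫⁻ x, g x) ^ t / b ^ t)) * c := by
          rw [hc, mul_mul_mul_comm, ENNReal.div_mul_cancel hat0 hatT,
            ENNReal.div_mul_cancel hbt0 hbtT]
      _ ≤ (∫⁻ x, h x) / c * c := by rw [div_eq_mul_inv _ c]; gcongr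
      _ = ∫⁻ x, h x := ENNReal.div_mul_cancel hc0 hcT
  · intro s hs x y hx hy
    have hx' := (ENNReal.ofReal_lt_iff_lt_toReal hs.le (hfaT x)).2 hx
    have hy' := (ENNReal.ofReal_lt_iff_lt_toReal hs.le (hgbT y)).2 hy
    rw [← ENNReal.ofReal_lt_iff_lt_toReal hs.le (hhT _)]
    refine lt_min ?_ (hx'.trans_le (hfa1 x))
    have hs' : ENNReal.ofReal s ≠ 0 := by simpa using hs
    calc ENNReal.ofReal s = ENNReal.ofReal s ^ (1 - t) * ENNReal.ofReal s ^ t := by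
          rw [← ENNReal.rpow_add _ _ hs' ENNReal.ofReal_ne_top]; simp
      _ < (f x / a) ^ (1 - t) * (g y / b) ^ t :=
          ENNReal.mul_lt_mul (ENNReal.rpow_lt_rpow hx' ht1') (ENNReal.rpow_lt_rpow hy' ht0)
      _ = f x ^ (1 - t) * g y ^ t / c := by
          rw [ENNReal.div_rpow_of_nonneg _ _ ht1'.le, ENNReal.div_rpow_of_nonneg _ _ ht0.le,
            hc, div_eq_mul_inv, div_eq_mul_inv, div_eq_mul_inv, ENNReal.mul_inv]
          · ring
          · exact Or.inl hat0
          · exact Or.inl hatT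
      _ ≤ h ((1 - t) * x + t * y) / c := ENNReal.div_le_div_right (hfgh x y) _

/-- The one-dimensional Prékopa–Leindler inequality, by truncating `f` and `g` at height `N` and
letting `N → ∞`. -/
theorem prekopa_leindler_real {f g h : ℝ → ℝ≥0∞} {t : ℝ} (ht0 : 0 < t) (ht1 : t < 1)
    (hf : Measurable f) (hg : Measurable g) (hh : Measurable h)
    (hfgh : ∀ x y, f x ^ (1 - t) * g y ^ t ≤ h ((1 - t) * x + t * y)) :
    (∫⁻ x, f x) ^ (1 - t) * (∫⁻ x, g x) ^ t ≤ ∫⁻ x, h x := by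
  have ht1' : 0 < 1 - t := sub_pos.2 ht1
  have trunc : ∀ {F : ℝ → ℝ≥0∞}, Measurable F →
      Filter.Tendsto (fun N : ℕ => ∫⁻ x, min (F x) N) Filter.atTop (nhds (∫⁻ x, F x)) := by
    intro F hF
    refine lintegral_tendsto_of_tendsto_of_monotone
      (fun N => (hF.min measurable_const).aemeasurable)
      (.of_forall fun x N M hNM => by dsimp only; gcongr) (.of_forall fun x => ?_)
    have := (tendsto_const_nhds (x := F x)).min ENNReal.tendsto_nat_nhds_top
    simpa using this
  have bd : ∀ N : ℕ, (∫⁻ x, min (f x) N) ^ (1 - t) * (∫⁻ x, min (g x) N) ^ t ≤ ∫⁻ x, h x :=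
    fun N => prekopa_leindler_real_bdd ht0 ht1 (hf.min measurable_const) (hg.min measurable_const)
      hh N (fun x => min_le_right _ _) (fun x => min_le_right _ _) fun x y =>
        le_trans (by gcongr <;> exact min_le_left _ _) (hfgh x y)
  rcases eq_or_ne (∫⁻ x, f x) 0 with h0 | h0
  · simp [h0, ht1']
  rcases eq_or_ne (∫⁻ x, g x) 0 with h0' | h0'
  · simp [h0', ht0]
  refine le_of_tendsto (ENNReal.Tendsto.mul ((trunc hf).ennrpow_const _) (Or.inl ?_)
    ((trunc hg).ennrpow_const _) (Or.inl ?_)) (.of_forall bd)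
  · simp [ENNReal.rpow_eq_zero_iff, h0, ht1'.not_gt]
  · simp [ENNReal.rpow_eq_zero_iff, h0', ht0.not_gt]

/-- The Prékopa–Leindler inequality in dimension `n`, by induction: integrating out the last `n`
coordinates preserves the hypothesis by the inductive assumption, and the marginals are functions
on the line. -/
theorem prekopa_leindler {t : ℝ} (ht0 : 0 < t) (ht1 : t < 1) (n : ℕ) :
    ∀ {f g h : (Fin n → ℝ) → ℝ≥0∞}, Measurable f → Measurable g → Measurable h →
    (∀ x y, f x ^ (1 - t) * g y ^ t ≤ h ((1 - t) • x + t • y)) →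
    (∫⁻ x, f x) ^ (1 - t) * (∫⁻ x, g x) ^ t ≤ ∫⁻ x, h x := by
  induction n with
  | zero =>
    intro f g h _ _ _ hfgh
    simp only [lintegral_unique, volume_pi, Measure.pi_univ, Finset.univ_eq_empty,
      Finset.prod_empty, mul_one]
    convert hfgh default default
  | succ n ih =>
    intro f g h hf hg hh hfgh
    let e := MeasurableEquiv.piFinSuccAbove (fun _ : Fin (n + 1) => ℝ) 0
    have slice : ∀ {F : (Fin (n + 1) → ℝ) → ℝ≥0∞}, Measurable F →
        ∫⁻ x, F x = ∫⁻ r : ℝ, ∫⁻ v : Fin n → ℝ, F (e.symm (r, v)) := by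
      intro F hF
      rw [← ((volume_preserving_piFinSuccAbove (fun _ : Fin (n + 1) => ℝ) 0).symm).lintegral_comp
        hF, Measure.volume_eq_prod]
      exact lintegral_prod _ (hF.comp e.symm.measurable).aemeasurable
    have meas : ∀ {F : (Fin (n + 1) → ℝ) → ℝ≥0∞}, Measurable F →
        Measurable fun r : ℝ => ∫⁻ v : Fin n → ℝ, F (e.symm (r, v)) := fun hF =>
      (hF.comp e.symm.measurable).lintegral_prod_right'
    rw [slice hf, slice hg, slice hh]
    refine prekopa_leindler_real ht0 ht1 (meas hf) (meas hg) (meas hh) fun x y => ?_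
    refine ih (hf.comp (e.symm.measurable.comp measurable_prodMk_left))
      (hg.comp (e.symm.measurable.comp measurable_prodMk_left))
      (hh.comp (e.symm.measurable.comp measurable_prodMk_left)) fun v w => ?_
    convert hfgh (e.symm (x, v)) (e.symm (y, w)) using 2
    ext i
    refine Fin.cases ?_ (fun j => ?_) i <;>
      simp [e, MeasurableEquiv.piFinSuccAbove, Fin.insertNthEquiv]

/-- The Brunn–Minkowski inequality for two sets of equal volume, from the Prékopa–Leindler
inequality applied to indicator functions. A measurable `C` containing `(1 - t) A + t B` stands in
for that set, whose measurability is then irrelevant. -/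
theorem volume_le_of_convexComb_subset {D : ℕ} {t : ℝ} (ht0 : 0 < t) (ht1 : t < 1)
    {A B C : Set (EuclideanSpace ℝ (Fin D))} (hA : MeasurableSet A) (hB : MeasurableSet B)
    (hC : MeasurableSet C) (hAB : volume A = volume B)
    (hABC : ∀ a ∈ A, ∀ b ∈ B, (1 - t) • a + t • b ∈ C) : volume A ≤ volume C := by
  have ht1' : 0 < 1 - t := sub_pos.2 ht1
  let e : (Fin D → ℝ) → EuclideanSpace ℝ (Fin D) := WithLp.toLp 2
  have he : MeasurePreserving e := PiLp.volume_preserving_toLp (Fin D)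
  have ind : ∀ {S : Set (EuclideanSpace ℝ (Fin D))}, MeasurableSet S →
      ∫⁻ x, (e ⁻¹' S).indicator (1 : (Fin D → ℝ) → ℝ≥0∞) x = volume S := fun hS => by
    rw [lintegral_indicator_one (he.measurable hS), he.measure_preimage hS.nullMeasurableSet]
  have mind : ∀ {S : Set (EuclideanSpace ℝ (Fin D))}, MeasurableSet S →
      Measurable ((e ⁻¹' S).indicator (1 : (Fin D → ℝ) → ℝ≥0∞)) := fun hS =>
    measurable_one.indicator (he.measurable hS)
  have key := prekopa_leindler ht0 ht1 D (mind hA) (mind hB) (mind hC) fun x y => by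
    by_cases hx : x ∈ e ⁻¹' A
    · by_cases hy : y ∈ e ⁻¹' B
      · have : (1 - t) • x + t • y ∈ e ⁻¹' C := hABC _ hx _ hy
        simp only [Set.indicator_of_mem hx, Set.indicator_of_mem hy, Set.indicator_of_mem this]
        simp
      · simp [Set.indicator_of_notMem hy, ht0]
    · simp [Set.indicator_of_notMem hx, ht1]
  rwa [ind hA, ind hB, ind hC, ← hAB, ← ENNReal.rpow_add_of_nonneg _ _ ht1'.le ht0.le,
    sub_add_cancel, ENNReal.rpow_one] at key

/-! ### Rotation-invariant measures and polar coordinates -/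

section Rotation

theorem ae_norm_eq_one {E : Type*} [NormedAddCommGroup E] [NormedSpace ℝ E]
    [MeasurableSpace E] {μ : Measure E} (hμ : IsRotInvSphereProb μ) : ∀ᵐ x ∂μ, ‖x‖ = 1 := by
  rw [ae_iff]; convert hμ.2.1 using 2; ext; simp

variable {D : ℕ}

/-- The characteristic function of a rotation-invariant measure depends only on the norm, since a
reflection exchanges any two vectors of equal norm. -/
theorem charFun_eq_of_norm_eq {m : Measure (EuclideanSpace ℝ (Fin D))}
    (hm : ∀ T : EuclideanSpace ℝ (Fin D) ≃ₗᵢ[ℝ] EuclideanSpace ℝ (Fin D), Measure.map T m = m)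
    {z w : EuclideanSpace ℝ (Fin D)} (hzw : ‖z‖ = ‖w‖) : charFun m z = charFun m w := by
  let T := ((ℝ ∙ (z - w))ᗮ).reflection
  have hT : T z = w := Submodule.reflection_sub hzw
  rw [← hT, charFun_apply, charFun_apply]
  conv_rhs => rw [← hm T]
  rw [integral_map_of_stronglyMeasurable T.continuous.measurable (by fun_prop)]
  simp

/-- Polar decomposition: a rotation-invariant finite measure `m` is the law of `‖x‖ • y`, where `x`
has law `m` and `y` is independent of `x` with law `μ` on the unit sphere. Both sides have the same
characteristic function: at `z` it equals `∫∫ exp (i ⟪x, ‖z‖ • y⟫)`, in which `x` and `y` may be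
exchanged because only the norms of the arguments matter. -/
theorem map_norm_smul_prod_eq {m μ : Measure (EuclideanSpace ℝ (Fin D))} [IsFiniteMeasure m]
    (hm : ∀ T : EuclideanSpace ℝ (Fin D) ≃ₗᵢ[ℝ] EuclideanSpace ℝ (Fin D), Measure.map T m = m)
    (hμ : IsRotInvSphereProb μ) :
    Measure.map (fun p : EuclideanSpace ℝ (Fin D) × EuclideanSpace ℝ (Fin D) => ‖p.1‖ • p.2)
      (m.prod μ) = m := by
  have hns := ae_norm_eq_one hμ
  obtain ⟨hμ1, -, hμ3⟩ := hμ
  have hcont : Continuous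
      (fun p : EuclideanSpace ℝ (Fin D) × EuclideanSpace ℝ (Fin D) => ‖p.1‖ • p.2) := by fun_prop
  symm
  refine Measure.ext_of_charFun (funext fun z => ?_)
  have hint : ∀ f : EuclideanSpace ℝ (Fin D) × EuclideanSpace ℝ (Fin D) → ℝ, Continuous f →
      Integrable (fun p => Complex.exp (f p * Complex.I)) (m.prod μ) := fun f hf =>
    Integrable.of_bound (C := 1) (by fun_prop)
      (.of_forall fun p => by rw [Complex.norm_exp_ofReal_mul_I])
  calc charFun m z = ∫ y, charFun m z ∂μ := by simp
    _ = ∫ y, charFun m (‖z‖ • y) ∂μ := by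
        refine integral_congr_ae (hns.mono fun y hy => ?_)
        exact charFun_eq_of_norm_eq hm (by simp [norm_smul, hy])
    _ = ∫ y, ∫ x, Complex.exp (⟪x, ‖z‖ • y⟫ * Complex.I) ∂m ∂μ := by simp only [charFun_apply]
    _ = ∫ x, ∫ y, Complex.exp (⟪x, ‖z‖ • y⟫ * Complex.I) ∂μ ∂m :=
        (integral_integral_swap (hint (fun p => ⟪p.1, ‖z‖ • p.2⟫) (by fun_prop))).symm
    _ = ∫ x, charFun μ (‖z‖ • x) ∂m := by
        simp only [charFun_apply, inner_smul_right, real_inner_comm]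
    _ = ∫ x, charFun μ (‖x‖ • z) ∂m := by
        refine integral_congr_ae (.of_forall fun x => ?_)
        exact charFun_eq_of_norm_eq hμ3 (by simp [norm_smul, mul_comm])
    _ = ∫ x, ∫ y, Complex.exp (⟪‖x‖ • y, z⟫ * Complex.I) ∂μ ∂m := by
        simp only [charFun_apply, inner_smul_right, inner_smul_left, RCLike.conj_to_real]
    _ = ∫ p, Complex.exp (⟪‖p.1‖ • p.2, z⟫ * Complex.I) ∂(m.prod μ) :=
        (integral_prod _ (hint (fun p => ⟪‖p.1‖ • p.2, z⟫) (by fun_prop))).symm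
    _ = _ := by
        rw [charFun_apply, integral_map hcont.measurable.aemeasurable
          (by fun_prop : Continuous _).aestronglyMeasurable]

/-- Volume in polar coordinates: a bounded set that reaches no further than `ρ y` in each unit
direction `y` has volume at most `(∫ ρ ^ D ∂μ) * vol B`. -/
theorem volume_le_lintegral_radial {μ : Measure (EuclideanSpace ℝ (Fin D))}
    (hμ : IsRotInvSphereProb μ) {S : Set (EuclideanSpace ℝ (Fin D))} (hS : MeasurableSet S)
    (hSb : Bornology.IsBounded S) {ρ : EuclideanSpace ℝ (Fin D) → ℝ} (hρ0 : ∀ y, 0 ≤ ρ y)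
    (hρ : ∀ y : EuclideanSpace ℝ (Fin D), ‖y‖ = 1 → ∀ r : ℝ, 0 ≤ r → r • y ∈ S → r ≤ ρ y) :
    volume S ≤ (∫⁻ y, ENNReal.ofReal (ρ y ^ D) ∂μ) *
      volume (Metric.ball (0 : EuclideanSpace ℝ (Fin D)) 1) := by
  have hns := ae_norm_eq_one hμ
  obtain ⟨R, hR⟩ := hSb.subset_closedBall 0
  -- The polar decomposition needs a finite measure, hence the restriction to a ball around `S`.
  let m := volume.restrict (Metric.closedBall (0 : EuclideanSpace ℝ (Fin D)) R)
  have : IsFiniteMeasure m := ⟨by simp [m, measure_closedBall_lt_top]⟩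
  have := hμ.1
  have hm : ∀ T : EuclideanSpace ℝ (Fin D) ≃ₗᵢ[ℝ] EuclideanSpace ℝ (Fin D),
      Measure.map T m = m := by
    intro T
    have := (T.measurePreserving.restrict_preimage
      (s := Metric.closedBall 0 R) Metric.isClosed_closedBall.measurableSet).map_eq
    rw [T.preimage_closedBall] at this
    simpa using this
  have hmeas : Measurable
      (fun p : EuclideanSpace ℝ (Fin D) × EuclideanSpace ℝ (Fin D) => ‖p.1‖ • p.2) := by fun_prop
  calc volume S = m S := by
        rw [Measure.restrict_apply hS, Set.inter_eq_self_of_subset_left hR]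
    _ = ∫⁻ y, m ((fun x => (x, y)) ⁻¹'
          ((fun p : EuclideanSpace ℝ (Fin D) × EuclideanSpace ℝ (Fin D) => ‖p.1‖ • p.2) ⁻¹' S))
          ∂μ := by
        conv_lhs => rw [← map_norm_smul_prod_eq hm hμ]
        rw [Measure.map_apply hmeas hS, Measure.prod_apply_symm (hmeas hS)]
    _ ≤ ∫⁻ y, ENNReal.ofReal (ρ y ^ D) *
          volume (Metric.ball (0 : EuclideanSpace ℝ (Fin D)) 1) ∂μ := by
        refine lintegral_mono_ae (hns.mono fun y hy => ?_)
        calc _ ≤ volume (Metric.closedBall (0 : EuclideanSpace ℝ (Fin D)) (ρ y)) := by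
              refine (Measure.restrict_apply_le _ _).trans (measure_mono fun x hx => ?_)
              simpa using hρ y hy ‖x‖ (norm_nonneg x) hx
          _ = _ := by rw [Measure.addHaar_closedBall _ _ (hρ0 y)]; simp
    _ = _ := lintegral_mul_const' _ _ measure_ball_lt_top.ne

end Rotation

/-- First-order comparison at `t = 0`: the integral of `(1 - t + t f) ^ D` is
`1 + t D (∫ f - 1) + O(t ^ 2)`, so if it is at least `1` for all small `t` then `∫ f ≥ 1`. -/
theorem le_integral_of_forall_le_pow {E : Type*} [MeasurableSpace E] {μ : Measure E}
    [IsProbabilityMeasure μ] {D : ℕ} (hD : D ≠ 0) {f : E → ℝ} (hf : Measurable f) {R : ℝ}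
    (hf0 : ∀ y, 0 ≤ f y) (hfR : ∀ᵐ y ∂μ, f y ≤ R)
    (H : ∀ t : ℝ, 0 < t → t < 1 → 1 ≤ ∫ y, (1 - t + t * f y) ^ D ∂μ) : 1 ≤ ∫ y, f y ∂μ := by
  have hfi : Integrable f μ := Integrable.of_bound (C := R) hf.aestronglyMeasurable
    (hfR.mono fun y hy => by rwa [Real.norm_of_nonneg (hf0 y)])
  have hDp : (0 : ℝ) < D := by positivity
  -- `M` bounds `D * |f - 1|`, so that `|t * D * (f - 1)| ≤ 1` as soon as `t ≤ M⁻¹`.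
  set M := D * (|R| + 1) with hM
  have hMp : 0 < M := by positivity
  have main : ∀ t : ℝ, 0 < t → t < min 1 M⁻¹ → 0 ≤ D * (∫ y, f y ∂μ - 1) + t * M ^ 2 := by
    intro t ht0 ht
    have ht1 : t < 1 := ht.trans_le (min_le_left _ _)
    have htM : t * M ≤ 1 := by
      have := ht.le.trans (min_le_right _ _)
      calc t * M ≤ M⁻¹ * M := by gcongr
        _ = 1 := inv_mul_cancel₀ hMp.ne'
    -- From `1 + s ≤ exp s` and `exp x ≤ 1 + x + x ^ 2` for `|x| ≤ 1`.
    have pw : ∀ᵐ y ∂μ, (1 - t + t * f y) ^ D ≤ 1 + t * (D * (f y - 1)) + (t * M) ^ 2 := by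
      filter_upwards [hfR] with y hy
      have h0 := hf0 y
      have hx : |t * (D * (f y - 1))| ≤ t * M := by
        rw [abs_mul, abs_of_pos ht0, abs_mul, abs_of_pos hDp, hM]
        gcongr
        rw [abs_le]; constructor <;> linarith [le_abs_self R, abs_nonneg R]
      have h1 := Real.abs_exp_sub_one_sub_id_le (hx.trans htM)
      have h2 : (t * (D * (f y - 1))) ^ 2 ≤ (t * M) ^ 2 := by
        rw [← sq_abs]; gcongr
      have h3 : (1 - t + t * f y) ^ D ≤ Real.exp (t * (D * (f y - 1))) := by
        calc (1 - t + t * f y) ^ D ≤ Real.exp (t * (f y - 1)) ^ D := by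
              have h4 := Real.add_one_le_exp (t * (f y - 1))
              have h5 : 0 ≤ 1 - t + t * f y := by nlinarith
              gcongr; linarith
          _ = _ := by rw [← Real.exp_nat_mul]; congr 1; ring
      linarith [le_abs_self (Real.exp (t * (D * (f y - 1))) - 1 - t * (D * (f y - 1)))]
    have hi1 : Integrable (fun y => 1 + t * (D * (f y - 1)) + (t * M) ^ 2) μ := by fun_prop
    have hi2 : Integrable (fun y => (1 - t + t * f y) ^ D) μ := by
      refine hi1.mono' (by fun_prop) (pw.mono fun y hy => ?_)
      have := hf0 y
      rwa [Real.norm_of_nonneg (pow_nonneg (by nlinarith) _)]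
    have h := (H t ht0 ht1).trans (integral_mono_ae hi2 hi1 pw)
    rw [integral_add (by fun_prop) (by fun_prop), integral_add (by fun_prop) (by fun_prop),
      integral_const_mul, integral_const_mul, integral_sub hfi (by fun_prop)] at h
    simp only [integral_const, probReal_univ, one_smul] at h
    have : 0 ≤ t * (D * (∫ y, f y ∂μ - 1) + t * M ^ 2) := by linarith
    exact nonneg_of_mul_nonneg_right this ht0
  have lim : Filter.Tendsto (fun t : ℝ => D * (∫ y, f y ∂μ - 1) + t * M ^ 2)
      (nhdsWithin 0 (Set.Ioi 0)) (nhds (D * (∫ y, f y ∂μ - 1) + 0 * M ^ 2)) :=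
    (by fun_prop : Continuous fun t : ℝ => D * (∫ y, f y ∂μ - 1) + t * M ^ 2).continuousWithinAt
  have h := ge_of_tendsto lim (by
    filter_upwards [Ioo_mem_nhdsGT (show (0 : ℝ) < min 1 M⁻¹ by positivity)] with t ht
    exact main t ht.1 ht.2)
  rw [zero_mul, add_zero] at h
  linarith [nonneg_of_mul_nonneg_right h hDp]

/-! ### Urysohn's inequality -/

section Urysohn

variable {D : ℕ} {μ : Measure (EuclideanSpace ℝ (Fin D))}
  {h : EuclideanSpace ℝ (Fin D) → ℝ}

/-- The convex body `{x | ∀ y, ⟪x, y⟫ ≤ h y}` whose support function is at most `h`. -/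
def wulff (h : EuclideanSpace ℝ (Fin D) → ℝ) : Set (EuclideanSpace ℝ (Fin D)) :=
  {x | ∀ y, ⟪x, y⟫ ≤ h y}

theorem isClosed_wulff : IsClosed (wulff h) := by
  simp only [wulff, Set.ofPred_forall]
  exact isClosed_iInter fun y => isClosed_le (by fun_prop) continuous_const

theorem exists_bound_of_homogeneous (hc : Continuous h)
    (hh : ∀ (r : ℝ) y, 0 ≤ r → h (r • y) = r * h y) : ∃ R, 0 ≤ R ∧ ∀ y, h y ≤ R * ‖y‖ := by
  obtain ⟨R, hR⟩ := ((isCompact_sphere (0 : EuclideanSpace ℝ (Fin D)) 1).image hc).bddAbove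
  refine ⟨max R 0, le_max_right _ _, fun y => ?_⟩
  rcases eq_or_ne y 0 with rfl | hy
  · have := hh 0 0 le_rfl
    simp at this; simp [this]
  · have hy' : ‖y‖ ≠ 0 := norm_ne_zero_iff.2 hy
    have h1 : h (‖y‖⁻¹ • y) ≤ R := hR ⟨_, by simp [norm_smul, hy'], rfl⟩
    have h2 := hh ‖y‖ (‖y‖⁻¹ • y) (norm_nonneg y)
    rw [smul_smul, mul_inv_cancel₀ hy', one_smul] at h2
    rw [h2, mul_comm]
    gcongr
    exact h1.trans (le_max_left _ _)

theorem isBounded_wulff (hc : Continuous h)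
    (hh : ∀ (r : ℝ) y, 0 ≤ r → h (r • y) = r * h y) : Bornology.IsBounded (wulff h) := by
  obtain ⟨R, hR0, hR⟩ := exists_bound_of_homogeneous hc hh
  refine Metric.isBounded_closedBall (x := 0) (r := R) |>.subset fun x hx => ?_
  have h1 := (hx x).trans (hR x)
  rw [real_inner_self_eq_norm_sq] at h1
  rw [mem_closedBall_zero_iff]
  by_contra hcon
  push Not at hcon
  nlinarith [norm_nonneg x]

/-- Urysohn's inequality for a body of the same volume as the unit ball. -/
theorem one_le_integral_of_volume_eq (hD : D ≠ 0) (hμ : IsRotInvSphereProb μ)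
    (hc : Continuous h) (h0 : ∀ y, 0 ≤ h y) (hh : ∀ (r : ℝ) y, 0 ≤ r → h (r • y) = r * h y)
    (hv : volume (Metric.ball (0 : EuclideanSpace ℝ (Fin D)) 1) = volume (wulff h)) :
    1 ≤ ∫ y, h y ∂μ := by
  have := hμ.1
  have hns := ae_norm_eq_one hμ
  obtain ⟨R, hR0, hR⟩ := exists_bound_of_homogeneous hc hh
  refine le_integral_of_forall_le_pow hD hc.measurable h0
    (hns.mono fun y hy => by simpa [hy] using hR y) fun t ht0 ht1 => ?_
  have ht1' : 0 < 1 - t := sub_pos.2 ht1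
  -- For `x ≠ 0` the condition reads `‖x‖ ≤ 1 - t + t * h (x / ‖x‖)`; multiplied by `‖x‖` it is a
  -- closed condition that makes sense at the origin too.
  let S : Set (EuclideanSpace ℝ (Fin D)) := {x | ‖x‖ ^ 2 ≤ (1 - t) * ‖x‖ + t * h x}
  have hSm : MeasurableSet S := (isClosed_le (by fun_prop) (by fun_prop)).measurableSet
  have hSb : Bornology.IsBounded S := by
    refine Metric.isBounded_closedBall (x := 0) (r := 1 + R) |>.subset fun x hx => ?_
    have hx' : ‖x‖ ^ 2 ≤ (1 - t) * ‖x‖ + t * h x := hx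
    rw [mem_closedBall_zero_iff]
    by_contra hcon
    push Not at hcon
    have := hR x
    have := norm_nonneg x
    nlinarith [mul_nonneg hR0 this, mul_le_mul_of_nonneg_left (hR x) ht0.le]
  have hBM := volume_le_of_convexComb_subset ht0 ht1 Metric.isOpen_ball.measurableSet
    isClosed_wulff.measurableSet hSm hv fun a ha b hb => by
      rw [mem_ball_zero_iff] at ha
      set x := (1 - t) • a + t • b with hx
      change ‖x‖ ^ 2 ≤ (1 - t) * ‖x‖ + t * h x
      -- Pair `x = (1 - t) a + t b` with itself: `⟪a, x⟫ ≤ ‖x‖` as `a` is in the unit ball, and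
      -- `⟪b, x⟫ ≤ h x` by definition of the Wulff shape.
      have h1 : ‖x‖ ^ 2 = (1 - t) * ⟪a, x⟫ + t * ⟪b, x⟫ := by
        rw [← real_inner_self_eq_norm_sq]
        conv_lhs => rw [hx, inner_add_left, inner_smul_left, inner_smul_left, ← hx]
        simp
      have h2 : ⟪a, x⟫ ≤ ‖x‖ :=
        (real_inner_le_norm a x).trans (mul_le_of_le_one_left (norm_nonneg x) ha.le)
      rw [h1]
      gcongr
      exact hb x
  have hrad := volume_le_lintegral_radial hμ hSm hSb (ρ := fun y => 1 - t + t * h y)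
    (fun y => by have := h0 y; positivity) fun y hy r hr hry => by
      have h1 : ‖r • y‖ ^ 2 ≤ (1 - t) * ‖r • y‖ + t * h (r • y) := hry
      rw [norm_smul, hy, mul_one, Real.norm_of_nonneg hr, hh r y hr] at h1
      rcases hr.eq_or_lt with rfl | hr'
      · have := h0 y; positivity
      · nlinarith
  have hvol := hBM.trans hrad
  have hB0 : volume (Metric.ball (0 : EuclideanSpace ℝ (Fin D)) 1) ≠ 0 :=
    (Metric.measure_ball_pos _ _ one_pos).ne'
  have h1 : 1 ≤ ∫⁻ y, ENNReal.ofReal ((1 - t + t * h y) ^ D) ∂μ := by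
    by_contra hcon
    push Not at hcon
    have := ENNReal.mul_lt_mul_left hB0 measure_ball_lt_top.ne hcon
    rw [one_mul] at this
    exact absurd hvol (not_le.2 this)
  rw [← ofReal_integral_eq_lintegral_ofReal] at h1
  · simpa using h1
  · refine Integrable.of_bound (C := (1 - t + t * R) ^ D) (by fun_prop) (hns.mono fun y hy => ?_)
    have := h0 y
    rw [Real.norm_of_nonneg (by positivity)]
    gcongr
    simpa [hy] using hR y
  · exact .of_forall fun y => by have := h0 y; positivity

/-- Urysohn's inequality: the volume radius of `wulff h` is at most the average of `h` on the
sphere. -/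
theorem urysohn (hD : D ≠ 0) (hμ : IsRotInvSphereProb μ)
    (hc : Continuous h) (h0 : ∀ y, 0 ≤ h y) (hh : ∀ (r : ℝ) y, 0 ≤ r → h (r • y) = r * h y) :
    (volume (wulff h) / volume (Metric.ball (0 : EuclideanSpace ℝ (Fin D)) 1)) ^ (1 / (D : ℝ)) ≤
      ENNReal.ofReal (∫ y, h y ∂μ) := by
  have hB0 : volume (Metric.ball (0 : EuclideanSpace ℝ (Fin D)) 1) ≠ 0 :=
    (Metric.measure_ball_pos _ _ one_pos).ne'
  have hBT : volume (Metric.ball (0 : EuclideanSpace ℝ (Fin D)) 1) ≠ ∞ := measure_ball_lt_top.ne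
  have hDp : (0 : ℝ) < D := by positivity
  rcases eq_or_ne (volume (wulff h)) 0 with hW | hW
  · simp [hW, hDp]
  have hWT : volume (wulff h) ≠ ∞ := (isBounded_wulff hc hh).measure_lt_top.ne
  set v := (volume (wulff h) / volume (Metric.ball (0 : EuclideanSpace ℝ (Fin D)) 1)).toReal
    with hv
  have hvT : volume (wulff h) / volume (Metric.ball (0 : EuclideanSpace ℝ (Fin D)) 1) ≠ ∞ :=
    ENNReal.div_ne_top hWT hB0
  have hvp : 0 < v := ENNReal.toReal_pos (ENNReal.div_pos hW hBT).ne' hvT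
  have hve : volume (wulff h) / volume (Metric.ball (0 : EuclideanSpace ℝ (Fin D)) 1) =
    ENNReal.ofReal v := (ENNReal.ofReal_toReal hvT).symm
  -- Dividing `h` by the volume radius `u` scales the Wulff shape to the volume of the unit ball.
  set u := v ^ (1 / (D : ℝ)) with hu
  have hup : 0 < u := by positivity
  have huD : u ^ D = v := by
    rw [hu, ← Real.rpow_natCast, ← Real.rpow_mul hvp.le, one_div_mul_cancel hDp.ne',
      Real.rpow_one]
  have hset : wulff (fun y => u⁻¹ * h y) = (u • ·) ⁻¹' wulff h := by
    ext x
    simp only [wulff, Set.mem_ofPred_eq, Set.mem_preimage, inner_smul_left, RCLike.conj_to_real]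
    refine forall_congr' fun y => ?_
    rw [← div_eq_inv_mul, le_div_iff₀ hup, mul_comm]
  have h1 := one_le_integral_of_volume_eq (h := fun y => u⁻¹ * h y) hD hμ (by fun_prop)
    (fun y => mul_nonneg (by positivity) (h0 y)) (fun r y hr => by rw [hh r y hr]; ring) (by
      rw [hset, Measure.addHaar_preimage_smul _ hup.ne', finrank_euclideanSpace_fin, huD,
        abs_of_pos (inv_pos.2 hvp), ENNReal.ofReal_inv_of_pos hvp, ← hve,
        ENNReal.inv_div (Or.inl hBT) (Or.inl hB0), ENNReal.div_mul_cancel hW hWT])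
  rw [integral_const_mul, ← div_eq_inv_mul, one_le_div hup] at h1
  rw [hve, ENNReal.ofReal_rpow_of_pos hvp]
  exact ENNReal.ofReal_le_ofReal h1

end Urysohn

/-! ### The norm `‖·‖_sq` -/

section SqNorm

variable {n k D : ℕ} {σ : Measure (EuclideanSpace ℝ (Fin n))}

theorem continuous_peval (p : MvPolynomial (Fin n) ℝ) : Continuous (peval p) :=
  (MvPolynomial.continuous_eval p).comp (by fun_prop)

theorem peval_add (p q : MvPolynomial (Fin n) ℝ) (x : EuclideanSpace ℝ (Fin n)) :
    peval (p + q) x = peval p x + peval q x := by simp [peval]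

theorem peval_smul (r : ℝ) (p : MvPolynomial (Fin n) ℝ) (x : EuclideanSpace ℝ (Fin n)) :
    peval (r • p) x = r * peval p x := by simp [peval]

theorem peval_sq (p : MvPolynomial (Fin n) ℝ) (x : EuclideanSpace ℝ (Fin n)) :
    peval (p ^ 2) x = peval p x ^ 2 := by simp [peval]

theorem peval_sum {m : ℕ} (g : Fin m → MvPolynomial (Fin n) ℝ) (x : EuclideanSpace ℝ (Fin n)) :
    peval (∑ i, g i) x = ∑ i, peval (g i) x := by simp [peval]

theorem peval_rSq {x : EuclideanSpace ℝ (Fin n)} (hx : ‖x‖ = 1) : peval (rSq n k) x = 1 := by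
  have : ∑ i, x i ^ 2 = 1 := by
    rw [← EuclideanSpace.real_norm_sq_eq, hx, one_pow]
  simp [peval, rSq, this]

theorem exists_peval_bound (p : MvPolynomial (Fin n) ℝ) :
    ∃ C, 0 ≤ C ∧ ∀ x : EuclideanSpace ℝ (Fin n), ‖x‖ = 1 → |peval p x| ≤ C := by
  obtain ⟨C, hC⟩ := (isCompact_sphere (0 : EuclideanSpace ℝ (Fin n)) 1).exists_bound_of_continuousOn
    (continuous_peval p).continuousOn
  exact ⟨max C 0, le_max_right _ _, fun x hx => (hC x (by simpa using hx)).trans (le_max_left _ _)⟩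

theorem integrable_of_continuous (hσ : IsRotInvSphereProb σ) {f : EuclideanSpace ℝ (Fin n) → ℝ}
    (hf : Continuous f) : Integrable f σ := by
  have := hσ.1
  obtain ⟨C, hC⟩ := (isCompact_sphere (0 : EuclideanSpace ℝ (Fin n)) 1).exists_bound_of_continuousOn
    hf.continuousOn
  exact Integrable.of_bound (C := C) hf.aestronglyMeasurable
    ((ae_norm_eq_one hσ).mono fun x hx => hC x (by simpa using hx))

theorem integrable_peval_mul (hσ : IsRotInvSphereProb σ) (p q : MvPolynomial (Fin n) ℝ) :
    Integrable (fun x => peval p x * peval q x) σ :=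
  integrable_of_continuous hσ ((continuous_peval p).mul (continuous_peval q))

theorem pinner_self_nonneg (g : MvPolynomial (Fin n) ℝ) : 0 ≤ pinner σ g g :=
  integral_nonneg fun _ => mul_self_nonneg _

theorem pinner_add_left (hσ : IsRotInvSphereProb σ) (p q g : MvPolynomial (Fin n) ℝ) :
    pinner σ (p + q) g = pinner σ p g + pinner σ q g := by
  simp only [pinner, peval_add, add_mul]
  exact integral_add (integrable_peval_mul hσ p g) (integrable_peval_mul hσ q g)

theorem pinner_smul_left (r : ℝ) (p g : MvPolynomial (Fin n) ℝ) :
    pinner σ (r • p) g = r * pinner σ p g := by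
  simp only [pinner, peval_smul, mul_assoc]
  exact integral_const_mul _ _

theorem pinner_comm (p g : MvPolynomial (Fin n) ℝ) : pinner σ p g = pinner σ g p := by
  simp only [pinner, mul_comm]

/-- Since `⟨f, g²⟩ = ∫ f g²`, a bound for `|f|` on the sphere bounds `|⟨f, g²⟩|` by `C ⟨g, g⟩`;
this makes the supremum defining `sqNorm` finite. -/
theorem abs_pinner_sq_le (hσ : IsRotInvSphereProb σ) {f : MvPolynomial (Fin n) ℝ} {C : ℝ}
    (hC : ∀ x : EuclideanSpace ℝ (Fin n), ‖x‖ = 1 → |peval f x| ≤ C)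
    (g : MvPolynomial (Fin n) ℝ) : |pinner σ f (g ^ 2)| ≤ C * pinner σ g g := by
  rw [pinner, pinner, ← integral_const_mul]
  refine (abs_integral_le_integral_abs).trans ?_
  refine integral_mono_ae (integrable_peval_mul hσ _ _).abs
    ((integrable_peval_mul hσ _ _).const_mul C) ((ae_norm_eq_one hσ).mono fun x hx => ?_)
  dsimp only
  rw [abs_mul, peval_sq, abs_sq, ← sq]
  gcongr
  exact hC x hx

theorem bddAbove_sqNorm (hσ : IsRotInvSphereProb σ) (f : MvPolynomial (Fin n) ℝ) :
    BddAbove ((fun g => |pinner σ f (g ^ 2)|) ''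
      {g : MvPolynomial (Fin n) ℝ | g.IsHomogeneous k ∧ pinner σ g g = 1}) := by
  obtain ⟨C, -, hC⟩ := exists_peval_bound f
  refine ⟨C, ?_⟩
  rintro _ ⟨g, ⟨-, hg⟩, rfl⟩
  simpa [hg] using abs_pinner_sq_le hσ hC g

theorem sqNorm_nonneg (f : MvPolynomial (Fin n) ℝ) : 0 ≤ sqNorm k σ f := by
  refine Real.sSup_nonneg ?_
  rintro _ ⟨g, -, rfl⟩
  exact abs_nonneg _

theorem sqNorm_smul {r : ℝ} (hr : 0 ≤ r) (f : MvPolynomial (Fin n) ℝ) :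
    sqNorm k σ (r • f) = r * sqNorm k σ f := by
  have h := Real.sSup_smul_of_nonneg hr ((fun g => |pinner σ f (g ^ 2)|) ''
    {g : MvPolynomial (Fin n) ℝ | g.IsHomogeneous k ∧ pinner σ g g = 1})
  rw [smul_eq_mul] at h
  rw [sqNorm, sqNorm, ← h, ← Set.image_smul, Set.image_image]
  simp only [pinner_smul_left, abs_mul, abs_of_nonneg hr, smul_eq_mul]

theorem sqNorm_add_le (hσ : IsRotInvSphereProb σ) (f g : MvPolynomial (Fin n) ℝ) :
    sqNorm k σ (f + g) ≤ sqNorm k σ f + sqNorm k σ g := by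
  refine Real.sSup_le ?_ (add_nonneg (sqNorm_nonneg f) (sqNorm_nonneg g))
  rintro _ ⟨q, hq, rfl⟩
  dsimp only
  rw [pinner_add_left hσ]
  exact (abs_add_le _ _).trans (add_le_add
    (le_csSup (bddAbove_sqNorm hσ f) ⟨q, hq, rfl⟩) (le_csSup (bddAbove_sqNorm hσ g) ⟨q, hq, rfl⟩))

/-- A seminorm is convex, and a finite convex function on a finite-dimensional space is
continuous. -/
theorem continuous_sqNorm_comp (hσ : IsRotInvSphereProb σ)
    (φ : EuclideanSpace ℝ (Fin D) →ₗ[ℝ] MvPolynomial (Fin n) ℝ) :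
    Continuous fun y => sqNorm k σ (φ y) := by
  refine (ConvexOn.locallyLipschitz (f := fun y => sqNorm k σ (φ y))
    ⟨convex_univ, fun x _ y _ a b ha hb _ => ?_⟩).continuous
  simp only [map_add, map_smul, smul_eq_mul]
  refine (sqNorm_add_le hσ _ _).trans_eq ?_
  rw [sqNorm_smul ha, sqNorm_smul hb]

/-- The defining inequality of `sqNorm`, homogenised in `g` so that no normalisation is needed. -/
theorem pinner_sq_le_sqNorm (hσ : IsRotInvSphereProb σ) (f : MvPolynomial (Fin n) ℝ)
    {g : MvPolynomial (Fin n) ℝ} (hg : g.IsHomogeneous k) :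
    pinner σ f (g ^ 2) ≤ pinner σ g g * sqNorm k σ f := by
  rcases (pinner_self_nonneg (σ := σ) g).eq_or_lt with h0 | hpos
  -- If `⟨g, g⟩ = 0` then `g` cannot be normalised, but `|⟨f, g²⟩| ≤ C ⟨g, g⟩ = 0`.
  · obtain ⟨C, -, hC⟩ := exists_peval_bound f
    have := (le_abs_self _).trans (abs_pinner_sq_le hσ hC g)
    simpa [← h0] using this
  · set c := pinner σ g g
    set s := (Real.sqrt c)⁻¹ with hs
    have hs2 : s * s = c⁻¹ := by
      rw [hs, ← mul_inv, Real.mul_self_sqrt hpos.le]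
    have h1 : pinner σ (s • g) (s • g) = 1 := by
      rw [pinner_smul_left, pinner_comm, pinner_smul_left, ← mul_assoc, hs2,
        inv_mul_cancel₀ hpos.ne']
    have h2 : pinner σ f ((s • g) ^ 2) = c⁻¹ * pinner σ f (g ^ 2) := by
      rw [smul_pow, pinner_comm, pinner_smul_left, pinner_comm, sq, hs2]
    have h3 : (s • g).IsHomogeneous k := by
      rw [MvPolynomial.smul_eq_C_mul]
      simpa using (MvPolynomial.isHomogeneous_C (Fin n) s).mul hg
    have h4 : |pinner σ f ((s • g) ^ 2)| ≤ sqNorm k σ f :=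
      le_csSup (bddAbove_sqNorm hσ f) ⟨s • g, ⟨h3, h1⟩, rfl⟩
    rw [h2] at h4
    have h5 := (le_abs_self _).trans h4
    rwa [← div_eq_inv_mul, div_le_iff₀' hpos] at h5

/-- The support function of `S̃q` is at most `‖·‖_sq`. -/
theorem preimage_Sqtilde_subset_wulff (hσ : IsRotInvSphereProb σ)
    {φ : EuclideanSpace ℝ (Fin D) →ₗ[ℝ] MvPolynomial (Fin n) ℝ} (hφ : IsCoordOfM n k D σ φ) :
    φ ⁻¹' Sqtilde n k σ ⊆ wulff fun y => sqNorm k σ (φ y) := by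
  have := hσ.1
  rintro x ⟨hxM, m, g, hg, hxg⟩ y
  have hyM : φ y ∈ Mset n k σ := hφ.2.1 ▸ Set.mem_range_self y
  have hI : ∀ p : MvPolynomial (Fin n) ℝ, Integrable (peval p) σ := fun p =>
    integrable_of_continuous hσ (continuous_peval p)
  have h1 : pinner σ (rSq n k) (φ y) = 0 := by
    rw [← hyM.2]
    exact integral_congr_ae ((ae_norm_eq_one hσ).mono fun x hx => by simp [peval_rSq hx])
  -- Integrating the sum of squares: `φ x` has mean zero, `r^{2k}` has mean one.
  have h2 : ∑ i, pinner σ (g i) (g i) = 1 := by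
    calc ∑ i, pinner σ (g i) (g i) = ∫ z, peval (φ x + rSq n k) z ∂σ := by
          rw [hxg]
          simp only [pinner, peval_sum, peval_sq]
          simp only [sq]
          exact (integral_finsetSum _ fun i _ => integrable_peval_mul hσ _ _).symm
      _ = ∫ z, peval (φ x) z ∂σ + ∫ z, peval (rSq n k) z ∂σ := by
          simp only [peval_add]
          exact integral_add (hI _) (hI _)
      _ = 1 := by
          rw [hxM.2, zero_add, integral_congr_ae
            ((ae_norm_eq_one hσ).mono fun z hz => peval_rSq hz : _ =ᵐ[σ] fun _ => (1 : ℝ))]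
          simp
  calc ⟪x, y⟫ = pinner σ (φ x + rSq n k) (φ y) := by
        rw [pinner_add_left hσ, h1, add_zero, hφ.2.2]
    _ = ∑ i, pinner σ (φ y) (g i ^ 2) := by
        rw [hxg, pinner_comm]
        simp only [pinner, peval_sum, Finset.mul_sum]
        exact integral_finsetSum _ fun i _ => integrable_peval_mul hσ _ _
    _ ≤ ∑ i, pinner σ (g i) (g i) * sqNorm k σ (φ y) :=
        Finset.sum_le_sum fun i _ => pinner_sq_le_sqNorm hσ _ (hg i)
    _ = sqNorm k σ (φ y) := by rw [← Finset.sum_mul, h2, one_mul]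

end SqNorm

/-- The volume ratio of S̃q is bounded above by the average of ‖·‖_sq. -/
theorem volume_ratio_le_average_sq_norm
    (n k D : ℕ) (hn : 1 ≤ n) (hk : 1 ≤ k)
    (σ : Measure (EuclideanSpace ℝ (Fin n))) (hσ : IsRotInvSphereProb σ)
    (φ : EuclideanSpace ℝ (Fin D) →ₗ[ℝ] MvPolynomial (Fin n) ℝ)
    (hφ : IsCoordOfM n k D σ φ)
    (μ : Measure (EuclideanSpace ℝ (Fin D))) (hμ : IsRotInvSphereProb μ) :
    (volume (φ ⁻¹' Sqtilde n k σ) /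
        volume (Metric.ball (0 : EuclideanSpace ℝ (Fin D)) 1)) ^ (1 / (D : ℝ)) ≤
      ENNReal.ofReal (∫ y, sqNorm k σ (φ y) ∂μ) := by
  have hD : D ≠ 0 := by
    rintro rfl
    -- In dimension zero the unit sphere is empty, so it carries no probability measure.
    have := hμ.1
    obtain ⟨y, hy⟩ := (ae_norm_eq_one hμ).exists
    simp [Subsingleton.elim y 0] at hy
  refine le_trans ?_ (urysohn hD hμ (continuous_sqNorm_comp hσ φ) (fun y => sqNorm_nonneg (φ y))
    fun r y hr => by rw [map_smul, sqNorm_smul hr])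
  gcongr
  exact preimage_Sqtilde_subset_wulff hσ hφ

end
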